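/- Let P be a finite planar point set in general position satisfying Property Δ_k, and let m : P → m(P) be a move taking an internal point z across a line ℓ of the arrangement 𝒜^z such that at least one endpoint of ℓ is an internal point of P. Then m(P) also satisfies Property Δ_k. -/

import Mathlib

open scoped Classical

noncomputable section

/-- No three distinct points of `P` are collinear. -/
def GenPos (P : Finset ℂ) : Prop :=
  ∀ x ∈ P, ∀ y ∈ P, ∀ z ∈ P, x ≠ y → x ≠ z → y ≠ z → ¬ Collinear ℝ ({x, y, z} : Set ℂ)

/-- `A` is a convex subset of `P`: `A ⊆ P` and no point of `A` lies in the interior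
of the convex hull of `A`. -/
def ConvexSubset (P A : Finset ℂ) : Prop :=
  A ⊆ P ∧ ∀ a ∈ A, a ∉ interior (convexHull ℝ (A : Set ℂ))

/-- Points of `P` in the interior of the convex hull of `A`. -/
def intPts (P A : Finset ℂ) : Finset ℂ :=
  P.filter (fun x => x ∈ interior (convexHull ℝ (A : Set ℂ)))

/-- Property `Δ_k`: every convex subset `A ⊆ P` has at most `|A| + k - 3` points of `P`
in the interior of its convex hull. -/
def PropertyDelta (P : Finset ℂ) (k : ℕ) : Prop :=
  ∀ A : Finset ℂ, ConvexSubset P A →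
    ((intPts P A).card : ℤ) ≤ (A.card : ℤ) + (k : ℤ) - 3

/-- A point is internal for `P` if it lies in the interior of the convex hull of `P`. -/
def Internal (P : Finset ℂ) (x : ℂ) : Prop :=
  x ∈ interior (convexHull ℝ (P : Set ℂ))

/-- A point of `P` is extremal if it lies on the boundary of the convex hull of `P`. -/
def Extremal (P : Finset ℂ) (x : ℂ) : Prop :=
  x ∈ P ∧ ¬ Internal P x

/-- The line through two points, as a subset of the plane. -/
def lineThrough (u v : ℂ) : Set ℂ :=
  ↑(affineSpan ℝ ({u, v} : Set ℂ))

/-- Signed area test: the side of the line through `a, b` on which `x` lies. -/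
def cross2 (a b x : ℂ) : ℝ :=
  (b.re - a.re) * (x.im - a.im) - (b.im - a.im) * (x.re - a.re)

/-- The line through `w₁, w₂` is non-separating: all internal points of `P` lie
(weakly) on one side of it. -/
def NonSeparating (P : Finset ℂ) (w₁ w₂ : ℂ) : Prop :=
  (∀ x ∈ P, Internal P x → 0 ≤ cross2 w₁ w₂ x) ∨
  (∀ x ∈ P, Internal P x → cross2 w₁ w₂ x ≤ 0)

/-- A move of configurations: `z ∈ P` is replaced by a point `z'` lying in the interior of
a region of the complement of the arrangement `𝒜^z` (lines through pairs of points of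
`P - {z}`) adjacent to the region of `z`, the two regions being separated by the line `ℓ`
through `w₁, w₂ ∈ P`: the segment from `z` to `z'` crosses `ℓ` and no other line of `𝒜^z`. -/
def MoveAcross (P : Finset ℂ) (z z' w₁ w₂ : ℂ) : Prop :=
  z ∈ P ∧ w₁ ∈ P ∧ w₂ ∈ P ∧ w₁ ≠ w₂ ∧ z ≠ w₁ ∧ z ≠ w₂ ∧ z' ∉ P ∧
  z ∉ lineThrough w₁ w₂ ∧ z' ∉ lineThrough w₁ w₂ ∧
  (∃ p ∈ segment ℝ z z', p ∈ lineThrough w₁ w₂) ∧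
  (∀ u ∈ P, ∀ v ∈ P, u ≠ v → u ≠ z → v ≠ z → ({u, v} : Set ℂ) ≠ ({w₁, w₂} : Set ℂ) →
    ∀ p ∈ segment ℝ z z', p ∉ lineThrough u v)

/-- The configuration resulting from a move. -/
def movedConfig (P : Finset ℂ) (z z' : ℂ) : Finset ℂ :=
  insert z' (P.erase z)

/-- A `Δ_k`-move between configurations. -/
def DeltaMove (k : ℕ) (P Q : Finset ℂ) : Prop :=
  PropertyDelta P k ∧ PropertyDelta Q k ∧
  ∃ z z' w₁ w₂, MoveAcross P z z' w₁ w₂ ∧ Q = movedConfig P z z'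

/-- Every point of `P` lies on the boundary of the convex hull of `P`. -/
def ConvexPosition (P : Finset ℂ) : Prop :=
  ∀ x ∈ P, ¬ Internal P x

theorem hull_diff_interior (S : Set ℂ) (hS : S.Finite) :
    convexHull ℝ (S \ interior (convexHull ℝ S)) = convexHull ℝ S := by
  apply Set.Subset.antisymm
  · exact convexHull_mono Set.sdiff_subset
  · have h1 := closure_convexHull_extremePoints (hS.isCompact_convexHull ℝ) (convex_convexHull ℝ S)
    have h2 : (convexHull ℝ S).extremePoints ℝ ⊆ S \ interior (convexHull ℝ S) := by
      intro x hx
      refine ⟨extremePoints_convexHull_subset hx, fun hi => ?_⟩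
      exact Set.disjoint_left.1 (disjoint_interior_extremePoints _) hi hx
    have h3 : IsClosed (convexHull ℝ (S \ interior (convexHull ℝ S))) :=
      (hS.subset Set.sdiff_subset).isClosed_convexHull ℝ
    calc convexHull ℝ S = closure (convexHull ℝ ((convexHull ℝ S).extremePoints ℝ)) := h1.symm
      _ ⊆ closure (convexHull ℝ (S \ interior (convexHull ℝ S))) :=
        closure_mono (convexHull_mono h2)
      _ = _ := h3.closure_eq

theorem hull_erase_interior (S : Set ℂ) (hS : S.Finite) (z : ℂ)
    (hz : z ∈ interior (convexHull ℝ S)) :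
    convexHull ℝ (S \ {z}) = convexHull ℝ S := by
  apply Set.Subset.antisymm
  · exact convexHull_mono Set.sdiff_subset
  · rw [← hull_diff_interior S hS]
    apply convexHull_mono
    rintro x ⟨h1, h2⟩
    refine ⟨h1, fun h => h2 ?_⟩
    rw [Set.mem_singleton_iff] at h
    rw [h]; exact hz

theorem exists_frontier_of_segment (V : Set ℂ) (a b : ℂ) (ha : a ∈ V) (hb : b ∉ V) :
    ∃ x ∈ segment ℝ a b, x ∈ frontier V := by
  by_contra! hcon
  have hp : IsPreconnected (segment ℝ a b) := (convex_segment a b).isPreconnected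
  have hcov : segment ℝ a b ⊆ interior V ∪ (closure V)ᶜ := by
    intro x hx
    have := hcon x hx
    by_contra h
    simp only [Set.mem_union, Set.mem_compl_iff, not_or, not_not] at h
    exact this ⟨h.2, h.1⟩
  have ha' : a ∈ interior V := by
    rcases hcov (left_mem_segment ℝ a b) with h | h
    · exact h
    · exact absurd (subset_closure ha) h
  have hb' : b ∈ (closure V)ᶜ := by
    rcases hcov (right_mem_segment ℝ a b) with h | h
    · exact absurd (interior_subset h) hb
    · exact h
  obtain ⟨x, -, h1, h2⟩ := hp _ _ isOpen_interior isClosed_closure.isOpen_compl hcov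
    ⟨a, left_mem_segment ℝ a b, ha'⟩ ⟨b, right_mem_segment ℝ a b, hb'⟩
  exact h2 (subset_closure (interior_subset h1))

theorem three_vectors (v : Fin 3 → ℂ) (l : Fin 3 → ℝ) (hl : ∀ i, 0 ≤ l i) (hs : ∑ i, l i ≤ 1) :
    ∃ i j, ∃ a b : ℝ, 0 ≤ a ∧ 0 ≤ b ∧ a + b ≤ 1 ∧ ∑ i, l i • v i = a • v i + b • v j := by
  have hdep : ¬ LinearIndependent ℝ v := by
    intro h
    have := h.fintype_card_le_finrank
    simp [Complex.finrank_real_complex] at this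
  obtain ⟨g0, hg0, i0, hi0⟩ := Fintype.not_linearIndependent_iff.1 hdep
  have : ∃ g : Fin 3 → ℝ, ∑ i, g i • v i = 0 ∧ (∃ i, g i ≠ 0) ∧ 0 ≤ ∑ i, g i := by
    rcases le_total 0 (∑ i, g0 i) with h | h
    · exact ⟨g0, hg0, ⟨i0, hi0⟩, h⟩
    · refine ⟨fun i => - g0 i, ?_, ⟨i0, by simpa using hi0⟩, ?_⟩
      · simp only [neg_smul, Finset.sum_neg_distrib, hg0, neg_zero]
      · simp only [Finset.sum_neg_distrib]; linarith
  obtain ⟨g, hg, ⟨i1, hi1⟩, hgs⟩ := this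
  have hpos : ∃ i, 0 < g i := by
    by_contra! hcon
    have h1 : ∑ i, g i < 0 := by
      have : ∑ i, g i < ∑ i : Fin 3, (0:ℝ) :=
        Finset.sum_lt_sum (fun i _ => hcon i) ⟨i1, Finset.mem_univ _, lt_of_le_of_ne (hcon i1) hi1⟩
      simpa using this
    linarith
  obtain ⟨i2, hi2⟩ := hpos
  obtain ⟨m, hm, hmin⟩ := Finset.exists_min_image (Finset.univ.filter (fun i => 0 < g i))
    (fun i => l i / g i) ⟨i2, by simp [hi2]⟩
  have hgm : 0 < g m := by simpa using hm
  set t := l m / g m with ht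
  have ht0 : 0 ≤ t := div_nonneg (hl m) hgm.le
  have hnn : ∀ i, 0 ≤ l i - t * g i := by
    intro i
    by_cases h : 0 < g i
    · have := hmin i (by simp [h])
      rw [le_div_iff₀ h] at this
      linarith
    · have : t * g i ≤ 0 := mul_nonpos_of_nonneg_of_nonpos ht0 (not_lt.1 h)
      linarith [hl i]
  have hz : l m - t * g m = 0 := by
    rw [ht]; field_simp; ring
  have hsum : ∑ i, (l i - t * g i) ≤ 1 := by
    rw [Finset.sum_sub_distrib, ← Finset.mul_sum]
    nlinarith
  have heq : ∑ i, l i • v i = ∑ i, (l i - t * g i) • v i := by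
    simp only [sub_smul, Finset.sum_sub_distrib, mul_smul, ← Finset.smul_sum, hg]
    simp
  rw [heq]
  simp only [Fin.sum_univ_three] at hsum ⊢
  have n0 := hnn 0
  have n1 := hnn 1
  have n2 := hnn 2
  fin_cases m
  · refine ⟨1, 2, _, _, n1, n2, by linarith, ?_⟩
    simp only [Fin.zero_eta] at hz
    rw [hz]; simp
  · refine ⟨0, 2, _, _, n0, n2, by linarith, ?_⟩
    simp only [Fin.mk_one] at hz
    rw [hz]; simp
  · refine ⟨0, 1, _, _, n0, n1, by linarith, ?_⟩
    simp only [Fin.reduceFinMk] at hz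
    rw [hz]; simp

theorem conic (q : ℂ) (S : Finset ℂ) (hS : S.Nonempty) :
    ∀ x ∈ convexHull ℝ (S : Set ℂ), ∃ u ∈ S, ∃ v ∈ S, ∃ a b : ℝ, 0 ≤ a ∧ 0 ≤ b ∧ a + b ≤ 1 ∧
      x = q + (a • (u - q) + b • (v - q)) := by
  induction hS using Finset.Nonempty.cons_induction with
  | singleton s =>
    intro x hx
    simp only [Finset.coe_singleton, convexHull_singleton, Set.mem_singleton_iff] at hx
    exact ⟨s, by simp, s, by simp, 1, 0, by norm_num, by norm_num, by norm_num, by simp [hx]⟩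
  | cons s S hs hne ih =>
    intro x hx
    rw [Finset.coe_cons, convexHull_insert (by simpa using hne)] at hx
    rw [mem_convexJoin] at hx
    obtain ⟨s', hs', y, hy, hxy⟩ := hx
    rw [Set.mem_singleton_iff] at hs'
    subst hs'
    obtain ⟨u, hu, v, hv, a, b, ha, hb, hab, rfl⟩ := ih y hy
    obtain ⟨c, d, hc, hd, hcd, rfl⟩ := hxy
    obtain ⟨i, j, e, f, he, hf, hef, heq⟩ := three_vectors ![s' - q, u - q, v - q]
      ![c, d * a, d * b] (by
        intro i; fin_cases i
        · exact hc
        · exact mul_nonneg hd ha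
        · exact mul_nonneg hd hb) (by
        simp only [Fin.sum_univ_three, Matrix.cons_val]
        nlinarith)
    have key : ∀ i : Fin 3, ∃ w ∈ Finset.cons s' S hs, (![s' - q, u - q, v - q] : Fin 3 → ℂ) i = w - q := by
      intro i; fin_cases i
      · exact ⟨s', by simp, rfl⟩
      · exact ⟨u, by simp [hu], rfl⟩
      · exact ⟨v, by simp [hv], rfl⟩
    obtain ⟨w1, hw1, e1⟩ := key i
    obtain ⟨w2, hw2, e2⟩ := key j
    refine ⟨w1, hw1, w2, hw2, e, f, he, hf, hef, ?_⟩
    rw [← e1, ← e2, ← heq]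
    simp only [Fin.sum_univ_three, Matrix.cons_val, Complex.real_smul]
    have : (c : ℂ) = 1 - d := by
      rw [← Complex.ofReal_one, ← Complex.ofReal_sub]; congr 1; linarith
    push_cast
    rw [this]
    ring

/-- swallow a point with two others -/
theorem swallow (S A : Finset ℂ) (q y : ℂ) (hq : q ∈ interior (convexHull ℝ (A : Set ℂ)))
    (hy : y ∈ interior (convexHull ℝ (S : Set ℂ))) :
    ∃ u ∈ S, ∃ v ∈ S, y ∈ interior (convexHull ℝ ((A ∪ {u, v} : Finset ℂ) : Set ℂ)) := by
  have hne : S.Nonempty := by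
    rcases S.eq_empty_or_nonempty with h | h
    · subst h; simp at hy
    · exact h
  have hcont : Filter.Tendsto (fun t : ℝ => y + t • (y - q)) (nhds 0) (nhds y) := by
    have : Continuous (fun t : ℝ => y + t • (y - q)) := by fun_prop
    have h := this.tendsto 0
    simpa using h
  have hev := hcont (mem_interior_iff_mem_nhds.1 hy)
  obtain ⟨t, ht0, ht⟩ : ∃ t : ℝ, 0 < t ∧ y + t • (y - q) ∈ convexHull ℝ (S : Set ℂ) := by
    obtain ⟨ε, hε, hb⟩ := Metric.mem_nhds_iff.1 hev
    refine ⟨ε / 2, by linarith, ?_⟩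
    apply hb
    simp [abs_of_pos hε, hε]
  obtain ⟨u, hu, v, hv, a, b, ha, hb, hab, heq⟩ := conic q S hne _ ht
  refine ⟨u, hu, v, hv, ?_⟩
  set K := convexHull ℝ ((A ∪ {u, v} : Finset ℂ) : Set ℂ) with hK
  have hKc : Convex ℝ K := convex_convexHull ℝ _
  have hqK : q ∈ interior K := by
    refine interior_mono (convexHull_mono ?_) hq
    intro x hx
    simp only [Finset.coe_union, Set.mem_union]; exact Or.inl hx
  have huK : u ∈ K := subset_convexHull ℝ _ (by simp)
  have hvK : v ∈ K := subset_convexHull ℝ _ (by simp)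
  have hrK : y + t • (y - q) ∈ K := by
    rw [heq]
    have := hKc.sum_mem (t := Finset.univ) (w := ![1 - a - b, a, b]) (z := ![q, u, v])
      (by intro i _; fin_cases i <;> simp <;> linarith)
      (by simp only [Fin.sum_univ_three, Matrix.cons_val]; ring)
      (by intro i _; fin_cases i
          · exact interior_subset hqK
          · exact huK
          · exact hvK)
    convert this using 1
    simp only [Fin.sum_univ_three, Matrix.cons_val, Complex.real_smul]
    push_cast
    ring
  have h1 : y = (t / (1 + t)) • q + (1 / (1 + t)) • (y + t • (y - q)) := by
    simp only [Complex.real_smul]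
    have : (1 + (t : ℂ)) ≠ 0 := by
      rw [← Complex.ofReal_one, ← Complex.ofReal_add]
      exact Complex.ofReal_ne_zero.2 (by positivity)
    push_cast
    field_simp
    ring
  rw [h1]
  exact hKc.combo_interior_self_mem_interior hqK hrK (by positivity) (by positivity)
    (by field_simp; ring)

theorem interior_of_triangle (q u v : ℂ) (a b : ℝ) (ha : 0 < a) (hb : 0 < b) (hab : a + b < 1)
    (hd : cross2 q u v ≠ 0) :
    q + (a • (u - q) + b • (v - q)) ∈ interior (convexHull ℝ ({q, u, v} : Set ℂ)) := by
  set d := cross2 q u v with hd'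
  have hd2 : d = (u.re - q.re) * (v.im - q.im) - (u.im - q.im) * (v.re - q.re) := rfl
  let f : ℂ → ℝ := fun y => ((y.re - q.re) * (v.im - q.im) - (y.im - q.im) * (v.re - q.re)) / d
  let g : ℂ → ℝ := fun y => ((u.re - q.re) * (y.im - q.im) - (u.im - q.im) * (y.re - q.re)) / d
  have hf : Continuous f := by
    have := Complex.continuous_re
    have := Complex.continuous_im
    fun_prop
  have hg : Continuous g := by
    have := Complex.continuous_re
    have := Complex.continuous_im
    fun_prop
  have hopen : IsOpen {y : ℂ | 0 < f y ∧ 0 < g y ∧ f y + g y < 1} :=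
    (isOpen_lt continuous_const hf).inter
      ((isOpen_lt continuous_const hg).inter (isOpen_lt (hf.add hg) continuous_const))
  refine mem_interior.2 ⟨_, ?_, hopen, ?_⟩
  · rintro y ⟨h1, h2, h3⟩
    have hy : y = (1 - f y - g y) • q + f y • u + g y • v := by
      apply Complex.ext
      · simp only [Complex.add_re, Complex.real_smul, Complex.mul_re, Complex.ofReal_re,
          Complex.ofReal_im, f, g]
        field_simp
        rw [hd2]; ring
      · simp only [Complex.add_im, Complex.real_smul, Complex.mul_im, Complex.ofReal_re,
          Complex.ofReal_im, f, g]
        field_simp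
        rw [hd2]; ring
    have := (convex_convexHull ℝ ({q, u, v} : Set ℂ)).sum_mem (t := Finset.univ)
      (w := ![1 - f y - g y, f y, g y]) (z := ![q, u, v])
      (by intro i _; fin_cases i <;> simp <;> linarith)
      (by simp only [Fin.sum_univ_three, Matrix.cons_val]; ring)
      (by intro i _; apply subset_convexHull; fin_cases i <;> simp)
    rw [hy]
    simpa only [Fin.sum_univ_three, Matrix.cons_val] using this
  · have e1 : f (q + (a • (u - q) + b • (v - q))) = a := by
      simp only [Complex.add_im, Complex.add_re, Complex.real_smul, Complex.mul_im, Complex.mul_re,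
        Complex.ofReal_re, Complex.ofReal_im, Complex.sub_re, Complex.sub_im, f]
      field_simp
      rw [hd2]; ring
    have e2 : g (q + (a • (u - q) + b • (v - q))) = b := by
      simp only [Complex.add_im, Complex.add_re, Complex.real_smul, Complex.mul_im, Complex.mul_re,
        Complex.ofReal_re, Complex.ofReal_im, Complex.sub_re, Complex.sub_im, g]
      field_simp
      rw [hd2]; ring
    simp only [Set.mem_ofPred_eq, e1, e2]
    exact ⟨ha, hb, hab⟩

theorem collinear_of_cross (q u v : ℂ) (h : cross2 q u v = 0) : Collinear ℝ ({q, u, v} : Set ℂ) := by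
  by_cases hu : u = q
  · subst hu; simpa using collinear_pair ℝ u v
  rw [collinear_iff_of_mem (p₀ := q) (by simp)]
  refine ⟨u - q, ?_⟩
  simp only [cross2] at h
  have hne : (u.re - q.re) ^ 2 + (u.im - q.im) ^ 2 ≠ 0 := by
    intro h0
    apply hu
    apply Complex.ext
    · nlinarith [sq_nonneg (u.re - q.re), sq_nonneg (u.im - q.im)]
    · nlinarith [sq_nonneg (u.re - q.re), sq_nonneg (u.im - q.im)]
  intro p hp
  simp only [Set.mem_insert_iff, Set.mem_singleton_iff] at hp
  rcases hp with rfl | rfl | rfl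
  · exact ⟨0, by simp⟩
  · exact ⟨1, by simp⟩
  · refine ⟨((u.re - q.re) * (p.re - q.re) + (u.im - q.im) * (p.im - q.im)) /
      ((u.re - q.re) ^ 2 + (u.im - q.im) ^ 2), ?_⟩
    apply Complex.ext
    · simp only [vadd_eq_add, Complex.add_re, Complex.real_smul, Complex.mul_re, Complex.ofReal_re,
        Complex.ofReal_im, Complex.sub_re, Complex.sub_im]
      field_simp
      linear_combination (-(u.im - q.im)) * h
    · simp only [vadd_eq_add, Complex.add_im, Complex.real_smul, Complex.mul_im, Complex.ofReal_re,
        Complex.ofReal_im, Complex.sub_re, Complex.sub_im]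
      field_simp
      linear_combination ((u.re - q.re)) * h

theorem boundary_mem_segment (S : Finset ℂ) (x : ℂ) (hx : x ∈ convexHull ℝ (S : Set ℂ))
    (hxi : x ∉ interior (convexHull ℝ (S : Set ℂ))) : ∃ s ∈ S, ∃ t ∈ S, x ∈ segment ℝ s t := by
  have hne : S.Nonempty := by
    rcases S.eq_empty_or_nonempty with h | h
    · subst h; simp at hx
    · exact h
  obtain ⟨q, hq⟩ := hne
  obtain ⟨u, hu, v, hv, a, b, ha, hb, hab, rfl⟩ := conic q S ⟨q, hq⟩ x hx
  have gen : ∀ s t : ℂ, q ∈ segment ℝ s t → u ∈ segment ℝ s t → v ∈ segment ℝ s t →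
      q + (a • (u - q) + b • (v - q)) ∈ segment ℝ s t := by
    intro s t h1 h2 h3
    have := (convex_segment (𝕜 := ℝ) s t).sum_mem (t := Finset.univ)
      (w := ![1 - a - b, a, b]) (z := ![q, u, v])
      (by intro i _; fin_cases i <;> simp <;> linarith)
      (by simp only [Fin.sum_univ_three, Matrix.cons_val]; ring)
      (by intro i _; fin_cases i
          · exact h1
          · exact h2
          · exact h3)
    convert this using 1
    simp only [Fin.sum_univ_three, Matrix.cons_val, Complex.real_smul]
    push_cast
    ring
  by_cases hd : cross2 q u v = 0
  · rcases (collinear_of_cross q u v hd).wbtw_or_wbtw_or_wbtw with h | h | h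
    · exact ⟨q, hq, v, hv, gen _ _ (left_mem_segment ..) (mem_segment_iff_wbtw.2 h) (right_mem_segment ..)⟩
    · exact ⟨u, hu, q, hq, gen _ _ (right_mem_segment ..) (left_mem_segment ..) (mem_segment_iff_wbtw.2 h)⟩
    · exact ⟨v, hv, u, hu, gen _ _ (mem_segment_iff_wbtw.2 h) (right_mem_segment ..) (left_mem_segment ..)⟩
  · rcases ha.eq_or_lt with ha0 | ha0
    · subst ha0
      refine ⟨q, hq, v, hv, 1 - b, b, by linarith, hb, by ring, ?_⟩
      simp only [Complex.real_smul]; push_cast; ring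
    rcases hb.eq_or_lt with hb0 | hb0
    · subst hb0
      refine ⟨q, hq, u, hu, 1 - a, a, by linarith, ha, by ring, ?_⟩
      simp only [Complex.real_smul]; push_cast; ring
    rcases hab.eq_or_lt with hab0 | hab0
    · refine ⟨u, hu, v, hv, a, b, ha, hb, hab0, ?_⟩
      have : (a : ℂ) = 1 - b := by
        rw [← Complex.ofReal_one, ← Complex.ofReal_sub]; congr 1; linarith
      simp only [Complex.real_smul, this]; ring
    · exfalso
      apply hxi
      refine interior_mono (convexHull_mono ?_) (interior_of_triangle q u v a b ha0 hb0 hab0 hd)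
      intro y hy
      simp only [Set.mem_insert_iff, Set.mem_singleton_iff] at hy
      rcases hy with rfl | rfl | rfl <;> assumption

/-- The set of apexes whose hull with `S` contains `x` is closed. -/
theorem apex_closed (S : Finset ℂ) (x : ℂ) :
    IsClosed {w : ℂ | x ∈ convexHull ℝ ((insert w S : Finset ℂ) : Set ℂ)} := by
  rw [← isOpen_compl_iff, isOpen_iff_mem_nhds]
  intro w hw
  simp only [Set.mem_compl_iff, Set.mem_ofPred_eq] at hw
  obtain ⟨f, c, h1, h2⟩ := geometric_hahn_banach_closed_point (convex_convexHull ℝ _)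
    ((Finset.finite_toSet (insert w S)).isClosed_convexHull ℝ) hw
  have hnh : {y : ℂ | f y < c} ∈ nhds w :=
    (isOpen_lt f.continuous continuous_const).mem_nhds
      (h1 w (subset_convexHull ℝ _ (by simp)))
  filter_upwards [hnh] with y hy
  simp only [Set.mem_compl_iff, Set.mem_ofPred_eq]
  intro hx
  have hsub : convexHull ℝ ((insert y S : Finset ℂ) : Set ℂ) ⊆ {p : ℂ | f p < c} := by
    apply convexHull_min
    · intro p hp
      simp only [Finset.coe_insert, Set.mem_insert_iff, Finset.mem_coe] at hp
      rcases hp with rfl | hp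
      · exact hy
      · exact h1 p (subset_convexHull ℝ _ (by simp [hp]))
    · exact convex_halfSpace_lt f.toLinearMap.isLinear c
  have := hsub hx
  simp only [Set.mem_ofPred_eq] at this
  linarith

theorem apex_open (S : Finset ℂ) (x w : ℂ)
    (hx : x ∈ interior (convexHull ℝ ((insert w S : Finset ℂ) : Set ℂ))) :
    w ∈ interior {w : ℂ | x ∈ convexHull ℝ ((insert w S : Finset ℂ) : Set ℂ)} := by
  rw [mem_interior_iff_mem_nhds]
  have hcont : Filter.Tendsto (fun w' : ℂ => x + (w - w')) (nhds w) (nhds x) := by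
    have : Continuous (fun w' : ℂ => x + (w - w')) := by fun_prop
    simpa using this.tendsto w
  filter_upwards [hcont (mem_interior_iff_mem_nhds.1 hx)] with w' hw'
  by_contra hcon
  simp only [Set.mem_preimage] at hw'
  obtain ⟨f, c, h1, h2⟩ := geometric_hahn_banach_closed_point (convex_convexHull ℝ _)
    ((Finset.finite_toSet (insert w' S)).isClosed_convexHull ℝ) hcon
  have hw1 : f w' < c := h1 w' (subset_convexHull ℝ _ (by simp))
  have hS : ∀ s ∈ S, f s < c := fun s hs => h1 s (subset_convexHull ℝ _ (by simp [hs]))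
  have key : ∀ M, c ≤ M → f w ≤ M → ∀ p ∈ convexHull ℝ ((insert w S : Finset ℂ) : Set ℂ), f p ≤ M := by
    intro M hM hwM p hp
    have hsub : convexHull ℝ ((insert w S : Finset ℂ) : Set ℂ) ⊆ {p : ℂ | f p ≤ M} := by
      apply convexHull_min
      · intro p hp
        simp only [Finset.coe_insert, Set.mem_insert_iff, Finset.mem_coe] at hp
        rcases hp with rfl | hp
        · exact hwM
        · exact (hS p hp).le.trans hM
      · exact convex_halfSpace_le f.toLinearMap.isLinear M
    exact hsub hp
  rcases le_total (f w) c with h | h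
  · have := key c le_rfl h x (interior_subset hx)
    linarith
  · have := key (f w) h le_rfl _ hw'
    simp only [map_add, map_sub] at this
    linarith

theorem delta_ext (P : Finset ℂ) (k : ℕ) (hΔ : PropertyDelta P k) (T : Finset ℂ) (hT : T ⊆ P) :
    ((intPts P T).card : ℤ) + (intPts T T).card ≤ (T.card : ℤ) + k - 3 := by
  set B := T.filter (fun x => ¬ x ∈ interior (convexHull ℝ (T : Set ℂ))) with hB
  have hBset : (B : Set ℂ) = (T : Set ℂ) \ interior (convexHull ℝ (T : Set ℂ)) := by
    ext x; simp [hB]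
  have hhull : convexHull ℝ (B : Set ℂ) = convexHull ℝ (T : Set ℂ) := by
    rw [hBset]; exact hull_diff_interior _ T.finite_toSet
  have hconv : ConvexSubset P B := by
    refine ⟨(Finset.filter_subset _ _).trans hT, ?_⟩
    intro a ha
    rw [hhull]
    exact (Finset.mem_filter.1 ha).2
  have h := hΔ B hconv
  have hi : intPts P B = intPts P T := by
    simp only [intPts, hhull]
  rw [hi] at h
  have hc : (intPts T T).card + B.card = T.card :=
    Finset.card_filter_add_card_filter_not (s := T)
      (fun x => x ∈ interior (convexHull ℝ (T : Set ℂ)))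
  omega

theorem move_symm {P : Finset ℂ} {z z' w₁ w₂ : ℂ} (h : MoveAcross P z z' w₁ w₂) :
    MoveAcross P z z' w₂ w₁ := by
  obtain ⟨a, b, c, d, e, f, g, i, j, l, m⟩ := h
  have e1 : lineThrough w₂ w₁ = lineThrough w₁ w₂ := by
    unfold lineThrough; rw [Set.pair_comm]
  refine ⟨a, c, b, d.symm, f, e, g, ?_, ?_, ?_, ?_⟩
  · rwa [e1]
  · rwa [e1]
  · rwa [e1]
  · rwa [Set.pair_comm w₂ w₁]

theorem segment_sub_line (s t x : ℂ) (h : x ∈ segment ℝ s t) : x ∈ lineThrough s t :=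
  (mem_segment_iff_wbtw.1 h).mem_affineSpan

theorem hull_erase_eq (P : Finset ℂ) (z : ℂ) (hz : Internal P z) :
    convexHull ℝ ((P.erase z : Finset ℂ) : Set ℂ) = convexHull ℝ (P : Set ℂ) := by
  rw [Finset.coe_erase]
  exact hull_erase_interior _ P.finite_toSet z hz

/-- The moving point never hits a point of `P`. -/
theorem point_avoid {P : Finset ℂ} {z z' w₁ w₂ : ℂ} (h : MoveAcross P z z' w₁ w₂)
    (hz : Internal P z) (x y : ℂ) (hx : x ∈ segment ℝ z z') (hy : y ∈ P) (hyz : y ≠ z) : x ≠ y := by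
  rintro rfl
  obtain ⟨zP, w1P, w2P, hne, zw1, zw2, -, hzl, -, -, hm⟩ := h
  have key : ∀ a ∈ P, a ≠ z → a ≠ x → ({x, a} : Set ℂ) = {w₁, w₂} := by
    intro a ha haz hax
    by_contra hcon
    exact hm x hy a ha hax.symm hyz haz hcon x hx (left_mem_affineSpan_pair ℝ x a)
  have hxw : x = w₁ ∨ x = w₂ := by
    by_contra! hcon
    have h1 := key w₁ w1P zw1.symm hcon.1.symm
    have : x ∈ ({w₁, w₂} : Set ℂ) := by rw [← h1]; simp
    simp only [Set.mem_insert_iff, Set.mem_singleton_iff] at this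
    tauto
  have hall : ∀ a ∈ P, a ≠ z → a = w₁ ∨ a = w₂ := by
    intro a ha haz
    by_cases hax : a = x
    · rw [hax]; exact hxw
    · have h1 := key a ha haz hax
      have : a ∈ ({w₁, w₂} : Set ℂ) := by rw [← h1]; simp
      simpa using this
  have hz2 : z ∈ convexHull ℝ ((P.erase z : Finset ℂ) : Set ℂ) := by
    rw [hull_erase_eq P z hz]; exact interior_subset hz
  have hz3 : z ∈ convexHull ℝ ({w₁, w₂} : Set ℂ) := by
    refine convexHull_mono ?_ hz2
    intro a ha
    have ha' := Finset.mem_erase.1 (Finset.mem_coe.1 ha)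
    simpa using hall a ha'.2 ha'.1
  exact hzl (convexHull_subset_affineSpan _ hz3)

theorem crossing {P : Finset ℂ} {z z' w₁ w₂ : ℂ} (h : MoveAcross P z z' w₁ w₂)
    (hz : Internal P z) (S : Finset ℂ) (hS : S ⊆ P.erase z) (a b : ℂ)
    (ha : a ∈ segment ℝ z z') (hb : b ∈ segment ℝ z z')
    (hai : a ∈ interior (convexHull ℝ (S : Set ℂ)))
    (hbi : b ∉ interior (convexHull ℝ (S : Set ℂ))) :
    ∃ x ∈ segment ℝ z z', x ∈ openSegment ℝ w₁ w₂ ∧ w₁ ∈ S ∧ w₂ ∈ S ∧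
      x ∉ interior (convexHull ℝ (S : Set ℂ)) := by
  obtain ⟨x, hx, hxf⟩ := exists_frontier_of_segment _ a b hai hbi
  have hx' : x ∈ segment ℝ z z' := (convex_segment z z').segment_subset ha hb hx
  have hxn : x ∉ interior (convexHull ℝ (S : Set ℂ)) := by
    have := hxf.2
    rwa [interior_interior] at this
  have hxh : x ∈ convexHull ℝ (S : Set ℂ) := by
    have h1 := closure_mono (interior_subset (s := convexHull ℝ (S : Set ℂ))) hxf.1
    rwa [(S.finite_toSet.isClosed_convexHull ℝ).closure_eq] at h1
  obtain ⟨s, hs, t, ht, hst⟩ := boundary_mem_segment S x hxh hxn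
  obtain ⟨hsz, hsP⟩ := Finset.mem_erase.1 (hS hs)
  obtain ⟨htz, htP⟩ := Finset.mem_erase.1 (hS ht)
  have hxs := point_avoid h hz x s hx' hsP hsz
  have hxt := point_avoid h hz x t hx' htP htz
  have hstne : s ≠ t := by
    rintro rfl
    rw [segment_same] at hst
    exact hxs hst
  have hpair : ({s, t} : Set ℂ) = {w₁, w₂} := by
    by_contra hcon
    exact h.2.2.2.2.2.2.2.2.2.2 s hsP t htP hstne hsz htz hcon x hx' (segment_sub_line s t x hst)
  have hop : x ∈ openSegment ℝ s t := mem_openSegment_of_ne_left_right hxs.symm hxt.symm hst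
  rcases Set.pair_eq_pair_iff.1 hpair with ⟨rfl, rfl⟩ | ⟨rfl, rfl⟩
  · exact ⟨x, hx', hop, hs, ht, hxn⟩
  · exact ⟨x, hx', by rwa [openSegment_symm], ht, hs, hxn⟩

/-- If the crossed segment has an endpoint interior to the hull of `S`, nothing is crossed. -/
theorem no_crossing {P : Finset ℂ} {z z' w₁ w₂ : ℂ} (h : MoveAcross P z z' w₁ w₂)
    (hz : Internal P z) (S : Finset ℂ) (hS : S ⊆ P.erase z) (a b : ℂ)
    (ha : a ∈ segment ℝ z z') (hb : b ∈ segment ℝ z z')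
    (hai : a ∈ interior (convexHull ℝ (S : Set ℂ)))
    (hw : w₁ ∈ interior (convexHull ℝ (S : Set ℂ)) ∨ w₁ ∉ S) :
    b ∈ interior (convexHull ℝ (S : Set ℂ)) := by
  by_contra hbi
  obtain ⟨x, -, hx, h1, h2, h3⟩ := crossing h hz S hS a b ha hb hai hbi
  rcases hw with hw | hw
  · exact h3 ((convex_convexHull ℝ _).openSegment_interior_self_subset_interior hw
      (subset_convexHull ℝ _ h2) hx)
  · exact hw h1

theorem status_change {P : Finset ℂ} (hgp : GenPos P) {z z' w₁ w₂ : ℂ}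
    (h : MoveAcross P z z' w₁ w₂)
    (hz : Internal P z) (S : Finset ℂ) (hS : S ⊆ P.erase z) (x : ℂ) (hxP : x ∈ P) (hxz : x ≠ z)
    (hxS : x ∉ S)
    (h1 : x ∈ interior (convexHull ℝ ((insert z' S : Finset ℂ) : Set ℂ)))
    (h2 : x ∉ interior (convexHull ℝ ((insert z S : Finset ℂ) : Set ℂ))) :
    ∃ p ∈ segment ℝ z z', ∃ y ∈ S, ({x, y} : Set ℂ) = {w₁, w₂} ∧ x ∈ openSegment ℝ p y := by
  obtain ⟨p, hp, hp1, hp2⟩ : ∃ p ∈ segment ℝ z z',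
      x ∈ convexHull ℝ ((insert p S : Finset ℂ) : Set ℂ) ∧
      x ∉ interior (convexHull ℝ ((insert p S : Finset ℂ) : Set ℂ)) := by
    by_cases hzV : x ∈ convexHull ℝ ((insert z S : Finset ℂ) : Set ℂ)
    · exact ⟨z, left_mem_segment ℝ z z', hzV, h2⟩
    · obtain ⟨p, hp, hpf⟩ := exists_frontier_of_segment
        {w : ℂ | x ∈ convexHull ℝ ((insert w S : Finset ℂ) : Set ℂ)} z' z
        (show x ∈ convexHull ℝ ((insert z' S : Finset ℂ) : Set ℂ) from interior_subset h1) hzV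
      refine ⟨p, by rwa [segment_symm], ?_, ?_⟩
      · have := hpf.1
        rw [(apex_closed S x).closure_eq] at this
        exact this
      · exact fun hi => hpf.2 (apex_open S x p hi)
  have hpx : p ≠ x := point_avoid h hz p x hp hxP hxz
  obtain ⟨s, hs, t, ht, hst⟩ := boundary_mem_segment _ x hp1 hp2
  have main : ∀ t ∈ S, x ∈ segment ℝ p t →
      ∃ p ∈ segment ℝ z z', ∃ y ∈ S, ({x, y} : Set ℂ) = {w₁, w₂} ∧ x ∈ openSegment ℝ p y := by
    intro t ht hst
    obtain ⟨htz, htP⟩ := Finset.mem_erase.1 (hS ht)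
    have hxt : x ≠ t := by rintro rfl; exact hxS ht
    refine ⟨p, hp, t, ht, ?_, mem_openSegment_of_ne_left_right hpx hxt.symm hst⟩
    by_contra hcon
    refine h.2.2.2.2.2.2.2.2.2.2 x hxP t htP hxt hxz htz hcon p hp ?_
    have hcol := (mem_segment_iff_wbtw.1 hst).collinear
    exact hcol.mem_affineSpan_of_mem_of_ne (p₁ := x) (p₂ := t) (by simp) (by simp) (by simp) hxt
  rw [Finset.mem_insert] at hs ht
  rcases hs with rfl | hs
  · rcases ht with rfl | ht
    · rw [segment_same] at hst
      exact absurd hst.symm hpx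
    · exact main t ht hst
  · rcases ht with rfl | ht
    · exact main s hs (by rwa [segment_symm])
    · exfalso
      obtain ⟨hsz, hsP⟩ := Finset.mem_erase.1 (hS hs)
      obtain ⟨htz, htP⟩ := Finset.mem_erase.1 (hS ht)
      have hxs : x ≠ s := by rintro rfl; exact hxS hs
      have hxt : x ≠ t := by rintro rfl; exact hxS ht
      have hstne : s ≠ t := by
        rintro rfl
        rw [segment_same] at hst
        exact hxs hst
      exact hgp s hsP x hxP t htP hxs.symm hstne hxt (mem_segment_iff_wbtw.1 hst).collinear

/-- Counting: a tight set cannot swallow one of its own points and another point together. -/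
theorem count_contra {P : Finset ℂ} {k : ℕ} (hΔ : PropertyDelta P k) (A : Finset ℂ) (hA : A ⊆ P)
    (htight : (A.card : ℤ) + k - 3 ≤ (intPts P A).card) (u v x y : ℂ) (hu : u ∈ P) (hv : v ∈ P)
    (hx : x ∈ A) (hy : y ∈ P) (hxy : x ≠ y)
    (hxA : x ∉ interior (convexHull ℝ (A : Set ℂ)))
    (hyA : y ∉ interior (convexHull ℝ (A : Set ℂ)))
    (hxT : x ∈ interior (convexHull ℝ ((A ∪ {u, v} : Finset ℂ) : Set ℂ)))
    (hyT : y ∈ interior (convexHull ℝ ((A ∪ {u, v} : Finset ℂ) : Set ℂ))) : False := by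
  set T : Finset ℂ := A ∪ {u, v} with hT
  have hTP : T ⊆ P := by
    intro a ha
    simp only [hT, Finset.mem_union, Finset.mem_insert, Finset.mem_singleton] at ha
    rcases ha with ha | rfl | rfl
    · exact hA ha
    · exact hu
    · exact hv
  have h1 := delta_ext P k hΔ T hTP
  have hcard : T.card ≤ A.card + 2 :=
    (Finset.card_union_le _ _).trans (Nat.add_le_add_left Finset.card_le_two _)
  have hL : 1 ≤ (intPts T T).card := by
    rw [Nat.one_le_iff_ne_zero, Finset.card_ne_zero]
    exact ⟨x, Finset.mem_filter.2 ⟨Finset.mem_union_left _ hx, hxT⟩⟩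
  have hsub : insert x (insert y (intPts P A)) ⊆ intPts P T := by
    intro a ha
    simp only [Finset.mem_insert] at ha
    rcases ha with rfl | rfl | ha
    · exact Finset.mem_filter.2 ⟨hA hx, hxT⟩
    · exact Finset.mem_filter.2 ⟨hy, hyT⟩
    · obtain ⟨ha1, ha2⟩ := Finset.mem_filter.1 ha
      refine Finset.mem_filter.2 ⟨ha1, interior_mono (convexHull_mono ?_) ha2⟩
      exact Finset.coe_subset.2 Finset.subset_union_left
  have hc := Finset.card_le_card hsub
  have hyn : y ∉ intPts P A := fun h => hyA (Finset.mem_filter.1 h).2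
  have hxn : x ∉ insert y (intPts P A) := by
    simp only [Finset.mem_insert, not_or]
    exact ⟨hxy, fun h => hxA (Finset.mem_filter.1 h).2⟩
  rw [Finset.card_insert_of_notMem hxn, Finset.card_insert_of_notMem hyn] at hc
  omega

/-- Case 1: the set does not use the moving point. -/
theorem case_one {P : Finset ℂ} {k : ℕ} (hΔ : PropertyDelta P k) {z z' w₁ w₂ : ℂ}
    (h : MoveAcross P z z' w₁ w₂) (hz : Internal P z) (hw : Internal P w₁) (A : Finset ℂ)
    (hA : A ⊆ P.erase z) (hconv : ConvexSubset P A)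
    (h1 : z' ∈ interior (convexHull ℝ (A : Set ℂ)))
    (h2 : z ∉ interior (convexHull ℝ (A : Set ℂ)))
    (htight : (A.card : ℤ) + k - 3 ≤ (intPts P A).card) : False := by
  obtain ⟨-, -, -, hwA, -, -⟩ := crossing h hz A hA z' z (right_mem_segment ..)
    (left_mem_segment ..) h1 h2
  have hwP : w₁ ∈ interior (convexHull ℝ ((P.erase z : Finset ℂ) : Set ℂ)) := by
    rw [hull_erase_eq P z hz]; exact hw
  obtain ⟨u, hu, v, hv, huv⟩ := swallow (P.erase z) A z' w₁ h1 hwP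
  have hTz : A ∪ {u, v} ⊆ P.erase z := by
    intro a ha
    simp only [Finset.mem_union, Finset.mem_insert, Finset.mem_singleton] at ha
    rcases ha with ha | rfl | rfl
    · exact hA ha
    · exact hu
    · exact hv
  have hzT := no_crossing h hz _ hTz z' z (right_mem_segment ..) (left_mem_segment ..)
    (interior_mono (convexHull_mono (Finset.coe_subset.2 Finset.subset_union_left)) h1)
    (Or.inl huv)
  exact count_contra hΔ A hconv.1 htight u v w₁ z (Finset.mem_of_mem_erase hu)
    (Finset.mem_of_mem_erase hv) hwA h.1 h.2.2.2.2.1.symm (hconv.2 _ hwA) h2 huv hzT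

/-- Case 2: the set uses the moving point and swallows `w₁`. -/
theorem case_two {P : Finset ℂ} {k : ℕ} (hΔ : PropertyDelta P k) {z z' w₁ w₂ : ℂ}
    (h : MoveAcross P z z' w₁ w₂) (hz : Internal P z) (hw : Internal P w₁) (S : Finset ℂ)
    (hS : S ⊆ P.erase z) (p : ℂ) (hp : p ∈ segment ℝ z z') (hw1S : w₁ ∉ S) (hw2S : w₂ ∈ S)
    (hpw : w₁ ∈ openSegment ℝ p w₂)
    (h2 : w₁ ∉ interior (convexHull ℝ ((insert z S : Finset ℂ) : Set ℂ)))
    (htight : ((insert z S).card : ℤ) + k - 3 ≤ (intPts P (insert z S)).card) : False := by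
  set A : Finset ℂ := insert z S with hAdef
  have hzA : z ∈ A := Finset.mem_insert_self _ _
  have hAP : A ⊆ P := by
    intro a ha
    rcases Finset.mem_insert.1 ha with rfl | ha
    · exact h.1
    · exact Finset.mem_of_mem_erase (hS ha)
  have hzn : z ∉ interior (convexHull ℝ (A : Set ℂ)) := by
    intro hzi
    have h3 := delta_ext P k hΔ A hAP
    have hL : 1 ≤ (intPts A A).card := by
      rw [Nat.one_le_iff_ne_zero, Finset.card_ne_zero]
      exact ⟨z, Finset.mem_filter.2 ⟨hzA, hzi⟩⟩
    omega
  have hk : 3 ≤ k := by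
    have h3 := hΔ ∅ ⟨by simp, by simp⟩
    simp only [Finset.card_empty] at h3
    omega
  have hne : (intPts P A).Nonempty := by
    rw [← Finset.card_pos]
    have : 1 ≤ A.card := Finset.card_pos.2 ⟨z, hzA⟩
    omega
  obtain ⟨q, hq⟩ := hne
  have hq' := (Finset.mem_filter.1 hq).2
  have hzP : z ∈ interior (convexHull ℝ ((P.erase w₁ : Finset ℂ) : Set ℂ)) := by
    rw [hull_erase_eq P w₁ hw]; exact hz
  obtain ⟨u, hu, v, hv, huv⟩ := swallow (P.erase w₁) A q z hq' hzP
  have hzw : z ≠ w₁ := h.2.2.2.2.1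
  obtain ⟨hu1, hu2⟩ := Finset.mem_erase.1 hu
  obtain ⟨hv1, hv2⟩ := Finset.mem_erase.1 hv
  set T : Finset ℂ := A ∪ {u, v} with hT
  have hTP : T ⊆ P := by
    intro a ha
    simp only [hT, Finset.mem_union, Finset.mem_insert, Finset.mem_singleton] at ha
    rcases ha with ha | rfl | rfl
    · exact hAP ha
    · exact hu2
    · exact hv2
  have hwT : w₁ ∉ T := by
    intro ha
    simp only [hT, hAdef, Finset.mem_union, Finset.mem_insert, Finset.mem_singleton] at ha
    rcases ha with (ha | ha) | ha | ha
    · exact hzw ha.symm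
    · exact hw1S ha
    · exact hu1 ha.symm
    · exact hv1 ha.symm
  have hhull : convexHull ℝ ((T.erase z : Finset ℂ) : Set ℂ) = convexHull ℝ (T : Set ℂ) :=
    hull_erase_eq T z huv
  have hpT : p ∈ interior (convexHull ℝ ((T.erase z : Finset ℂ) : Set ℂ)) := by
    refine no_crossing h hz (T.erase z) (Finset.erase_subset_erase _ hTP) z p
      (left_mem_segment ..) hp ?_ (Or.inr fun ha => hwT (Finset.mem_of_mem_erase ha))
    rw [hhull]; exact huv
  rw [hhull] at hpT
  have hw2T : w₂ ∈ T := by simp [hT, hAdef, hw2S]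
  have hw1T : w₁ ∈ interior (convexHull ℝ (T : Set ℂ)) :=
    (convex_convexHull ℝ _).openSegment_interior_self_subset_interior hpT
      (subset_convexHull ℝ _ hw2T) hpw
  exact count_contra hΔ A hAP htight u v z w₁ hu2 hv2 hzA h.2.1 hzw hzn h2 huv hw1T

theorem moved_internal {P : Finset ℂ} {z z' w₁ w₂ : ℂ}
    (h : MoveAcross P z z' w₁ w₂) (hz : Internal P z) (hw : Internal P w₁) : Internal P z' := by
  have hh := hull_erase_eq P z hz
  have := no_crossing h hz (P.erase z) subset_rfl z z' (left_mem_segment ..)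
    (right_mem_segment ..) (by rw [hh]; exact hz) (Or.inl (by rw [hh]; exact hw))
  rw [hh] at this
  exact this

/-- The main theorem, with `w₁` internal. -/
theorem main_aux (k : ℕ)
    (P : Finset ℂ) (hgp : GenPos P) (hΔ : PropertyDelta P k)
    (z z' w₁ w₂ : ℂ) (hmove : MoveAcross P z z' w₁ w₂)
    (hz : Internal P z) (hw : Internal P w₁) :
    PropertyDelta (movedConfig P z z') k := by
  intro A hA
  obtain ⟨hAQ, hAc⟩ := hA
  by_cases hzA : z' ∈ A
  · set S := A.erase z' with hSdef
    have hAS : insert z' S = A := Finset.insert_erase hzA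
    have hSP : S ⊆ P.erase z := by
      intro a ha
      obtain ⟨h1, h2⟩ := Finset.mem_erase.1 ha
      rcases Finset.mem_insert.1 (hAQ h2) with h3 | h3
      · exact absurd h3 h1
      · exact h3
    have hzS : z ∉ S := fun hh => (Finset.mem_erase.1 (hSP hh)).1 rfl
    have hz'S : z' ∉ S := by simp [hSdef]
    have hcard : (insert z S).card = A.card := by
      rw [← hAS, Finset.card_insert_of_notMem hzS, Finset.card_insert_of_notMem hz'S]
    have hB : insert z S ⊆ P := by
      intro a ha
      rcases Finset.mem_insert.1 ha with rfl | ha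
      · exact hmove.1
      · exact Finset.mem_of_mem_erase (hSP ha)
    have hd := delta_ext P k hΔ _ hB
    by_contra hcon
    have hint : ∀ x ∈ intPts (movedConfig P z z') A, x ∈ P ∧ x ≠ z ∧ x ∉ S ∧
        x ∈ interior (convexHull ℝ ((insert z' S : Finset ℂ) : Set ℂ)) := by
      intro x hx
      obtain ⟨h1, h2⟩ := Finset.mem_filter.1 hx
      have hxA : x ∉ A := fun hh => hAc x hh h2
      rcases Finset.mem_insert.1 h1 with h3 | h3
      · exact absurd (h3 ▸ hzA) hxA
      · obtain ⟨h4, h5⟩ := Finset.mem_erase.1 h3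
        exact ⟨h5, h4, fun hh => hxA (Finset.mem_of_mem_erase hh), by rw [hAS]; exact h2⟩
    have hex : ∃ x ∈ intPts (movedConfig P z z') A, x ∉ intPts P (insert z S) := by
      by_contra! hall
      have := Finset.card_le_card (show intPts (movedConfig P z z') A ⊆ _ from hall)
      omega
    obtain ⟨x, hx, hxn⟩ := hex
    obtain ⟨hxP, hxz, hxS, hxi⟩ := hint x hx
    have hxn' : x ∉ interior (convexHull ℝ ((insert z S : Finset ℂ) : Set ℂ)) :=
      fun hh => hxn (Finset.mem_filter.2 ⟨hxP, hh⟩)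
    obtain ⟨p, hp, y, hy, hxy, hpo⟩ := status_change hgp hmove hz S hSP x hxP hxz hxS hxi hxn'
    have honly : intPts (movedConfig P z z') A ⊆ insert x (intPts P (insert z S)) := by
      intro x2 hx2
      rw [Finset.mem_insert]
      by_contra! hc
      obtain ⟨hxP2, hxz2, hxS2, hxi2⟩ := hint x2 hx2
      have hxn2 : x2 ∉ interior (convexHull ℝ ((insert z S : Finset ℂ) : Set ℂ)) :=
        fun hh => hc.2 (Finset.mem_filter.2 ⟨hxP2, hh⟩)
      obtain ⟨p2, hp2, y2, hy2, hxy2, hpo2⟩ :=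
        status_change hgp hmove hz S hSP x2 hxP2 hxz2 hxS2 hxi2 hxn2
      have : x2 ∈ ({x, y} : Set ℂ) := by rw [hxy, ← hxy2]; simp
      simp only [Set.mem_insert_iff, Set.mem_singleton_iff] at this
      rcases this with h3 | h3
      · exact hc.1 h3
      · exact hxS2 (h3 ▸ hy)
    have hc1 := (Finset.card_le_card honly).trans (Finset.card_insert_le _ _)
    have htight : ((insert z S).card : ℤ) + k - 3 ≤ (intPts P (insert z S)).card := by
      omega
    have hz'I : Internal P z' := moved_internal hmove hz hw
    have hxI : Internal P x := by
      refine interior_mono (convexHull_min ?_ (convex_convexHull ℝ _)) hxi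
      intro a ha
      rcases Finset.mem_insert.1 (Finset.mem_coe.1 ha) with rfl | ha
      · exact interior_subset hz'I
      · exact subset_convexHull ℝ _ (Finset.mem_of_mem_erase (hSP ha))
    rcases Set.pair_eq_pair_iff.1 hxy with ⟨rfl, rfl⟩ | ⟨rfl, rfl⟩
    · exact case_two hΔ hmove hz hxI S hSP p hp hxS hy hpo hxn' htight
    · exact case_two hΔ (move_symm hmove) hz hxI S hSP p hp hxS hy hpo hxn' htight
  · have hAP : A ⊆ P.erase z := by
      intro a ha
      rcases Finset.mem_insert.1 (hAQ ha) with h3 | h3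
      · exact absurd (h3 ▸ ha) hzA
      · exact h3
    have hconv : ConvexSubset P A := ⟨hAP.trans (Finset.erase_subset _ _), hAc⟩
    have hd := hΔ A hconv
    by_contra hcon
    have hz'i : z' ∈ interior (convexHull ℝ (A : Set ℂ)) := by
      by_contra hn
      have hsub : intPts (movedConfig P z z') A ⊆ intPts P A := by
        intro x hx
        obtain ⟨h1, h2⟩ := Finset.mem_filter.1 hx
        rcases Finset.mem_insert.1 h1 with h3 | h3
        · exact absurd (h3 ▸ h2) hn
        · exact Finset.mem_filter.2 ⟨Finset.mem_of_mem_erase h3, h2⟩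
      have := Finset.card_le_card hsub
      omega
    have hsub : intPts (movedConfig P z z') A ⊆ insert z' ((intPts P A).erase z) := by
      intro x hx
      obtain ⟨h1, h2⟩ := Finset.mem_filter.1 hx
      rcases Finset.mem_insert.1 h1 with h3 | h3
      · rw [h3]; exact Finset.mem_insert_self _ _
      · obtain ⟨h4, h5⟩ := Finset.mem_erase.1 h3
        exact Finset.mem_insert_of_mem (Finset.mem_erase.2 ⟨h4, Finset.mem_filter.2 ⟨h5, h2⟩⟩)
    have hc := (Finset.card_le_card hsub).trans (Finset.card_insert_le _ _)
    have hzi : z ∉ interior (convexHull ℝ (A : Set ℂ)) := by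
      intro hi
      have hm : z ∈ intPts P A := Finset.mem_filter.2 ⟨hmove.1, hi⟩
      rw [Finset.card_erase_add_one hm] at hc
      omega
    have hc2 := Finset.card_le_card (Finset.erase_subset z (intPts P A))
    refine case_one hΔ hmove hz hw A hAP hconv hz'i hzi ?_
    omega


/-- Moving an internal point across a line of the arrangement `𝒜^z` having at least
one internal endpoint preserves Property `Δ_k`. -/
theorem propertyDelta_of_move_internal_endpoint (k : ℕ)
    (P : Finset ℂ) (hgp : GenPos P) (hΔ : PropertyDelta P k)
    (z z' w₁ w₂ : ℂ) (hmove : MoveAcross P z z' w₁ w₂)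
    (hz : Internal P z) (hw : Internal P w₁ ∨ Internal P w₂) :
    PropertyDelta (movedConfig P z z') k := by
  rcases hw with hw | hw
  · exact main_aux k P hgp hΔ z z' w₁ w₂ hmove hz hw
  · exact main_aux k P hgp hΔ z z' w₂ w₁ (move_symm hmove) hz hw
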